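/- Let P be a set of n ≥ 5 points in the plane in convex position. Then the edge set of the complete geometric graph K(P) can be partitioned into ⌈n/3⌉ classes such that each class, viewed as a geometric graph on P, is 1-plane (each edge crosses at most 1 other edge of its class). -/

import Mathlib

/-- Points of the plane. -/
abbrev Pt : Type := ℝ × ℝ

/-- A finite point set is in general position if no three of its points are collinear. -/
def GenPos (P : Finset Pt) : Prop :=
  ∀ p ∈ P, ∀ q ∈ P, ∀ r ∈ P, p ≠ q → p ≠ r → q ≠ r →
    ¬ Collinear ℝ ({p, q, r} : Set Pt)

/-- A finite point set is in convex position: general position and no point lies in the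
convex hull of the others. -/
def ConvexPos (P : Finset Pt) : Prop :=
  GenPos P ∧ ∀ p ∈ P, p ∉ convexHull ℝ ((P.erase p : Finset Pt) : Set Pt)

/-- The edge set of the complete geometric graph on `P`: all unordered pairs of
distinct points of `P`. -/
def KEdges (P : Finset Pt) : Set (Sym2 Pt) :=
  {e | ∃ p ∈ P, ∃ q ∈ P, p ≠ q ∧ e = s(p, q)}

/-- Two edges cross: they share no endpoint and their open segments intersect. -/
def Cross (e f : Sym2 Pt) : Prop :=
  (∀ x, x ∈ e → x ∉ f) ∧
    ∃ p q r s : Pt, e = s(p, q) ∧ f = s(r, s) ∧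
      (openSegment ℝ p q ∩ openSegment ℝ r s).Nonempty

/-- A set of edges is `k`-plane if each of its edges crosses at most `k` other edges
of the set. -/
def KPlane (k : ℕ) (E : Set (Sym2 Pt)) : Prop :=
  ∀ e ∈ E, {f | f ∈ E ∧ Cross e f}.ncard ≤ k

/-- A set of edges is `k`-quasi-plane if it contains no `k` pairwise crossing edges. -/
def KQuasiPlane (k : ℕ) (E : Set (Sym2 Pt)) : Prop :=
  ¬ ∃ S : Finset (Sym2 Pt), ↑S ⊆ E ∧ S.card = k ∧
      (S : Set (Sym2 Pt)).Pairwise Cross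

/-- The set of crossing pairs (unordered) of a set of edges. -/
def CrossPairs (E : Set (Sym2 Pt)) : Set (Sym2 (Sym2 Pt)) :=
  {c | ∃ e ∈ E, ∃ f ∈ E, Cross e f ∧ c = s(e, f)}

/-- A crossing family in `K(P)`: a finite set of pairwise crossing edges of `K(P)`. -/
def CrossingFamily (P : Finset Pt) (S : Finset (Sym2 Pt)) : Prop :=
  ↑S ⊆ KEdges P ∧ (S : Set (Sym2 Pt)).Pairwise Cross

/-- `E` forms a spanning tree on the point set `P`: all edges are edges of `K(P)` and the
corresponding graph on the points of `P` is connected and acyclic. -/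
def IsSpanningTreeOn (P : Finset Pt) (E : Set (Sym2 Pt)) : Prop :=
  E ⊆ KEdges P ∧
    (SimpleGraph.fromRel (fun a b : {x // x ∈ P} => s((a : Pt), (b : Pt)) ∈ E)).IsTree

/-! `m` consecutive parallel classes of chords of a regular `n`-gon form an
`(m - 1).choose 2`-plane graph. If the chord `x y` crosses `i j`, with `x` on the arc from `i` to
`j`, then rotating one chord into the other in two steps, each moving one endpoint, passes through
the slope of `x j` or of `i x`, which lies strictly between those of `i j` and `x y`. The crossing
chord is determined by its own slope and this intermediate one, which form a two-element set of
slopes of the window other than the slope of `i j`. For arbitrary points in convex position the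
same classes work, since the cyclic order of the endpoints determines which edges cross. -/

open Finset

section Orientation

/-- Twice the signed area of the triangle `p q r`, positive if the triangle is oriented
counterclockwise. -/
def orient (p q r : Pt) : ℝ :=
  (q.1 - p.1) * (r.2 - p.2) - (q.2 - p.2) * (r.1 - p.1)

variable {a b c d o p q r : Pt}

lemma orient_rotate (p q r : Pt) : orient q r p = orient p q r := by
  unfold orient
  ring

lemma orient_swap (p q r : Pt) : orient p r q = -orient p q r := by
  unfold orient
  ring

lemma orient_self_right (p q : Pt) : orient p q q = 0 := by
  unfold orient
  ring

lemma collinear_of_orient_eq_zero (h : orient p q r = 0) : Collinear ℝ ({p, q, r} : Set Pt) := by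
  obtain rfl | hqr := eq_or_ne q r
  · simpa using collinear_pair ℝ p q
  apply collinear_insert_of_mem_affineSpan_pair
  have hnorm : (r.1 - q.1) ^ 2 + (r.2 - q.2) ^ 2 ≠ 0 := by
    contrapose! hqr
    exact Prod.ext (by nlinarith [sq_nonneg (r.1 - q.1), sq_nonneg (r.2 - q.2)])
      (by nlinarith [sq_nonneg (r.1 - q.1), sq_nonneg (r.2 - q.2)])
  -- `p` equals its orthogonal projection onto the line `q r`.
  let t := ((p.1 - q.1) * (r.1 - q.1) + (p.2 - q.2) * (r.2 - q.2)) /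
    ((r.1 - q.1) ^ 2 + (r.2 - q.2) ^ 2)
  have hp : AffineMap.lineMap q r t = p := by
    unfold orient at h
    ext
    · simp only [t, AffineMap.lineMap_apply, vadd_eq_add, vsub_eq_sub, Prod.fst_add, Prod.smul_fst,
        Prod.fst_sub, smul_eq_mul]
      field_simp
      linear_combination (r.2 - q.2) * h
    · simp only [t, AffineMap.lineMap_apply, vadd_eq_add, vsub_eq_sub, Prod.snd_add, Prod.smul_snd,
        Prod.snd_sub, smul_eq_mul]
      field_simp
      linear_combination (q.1 - r.1) * h
  exact hp ▸ AffineMap.lineMap_mem_affineSpan_pair t q r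

lemma orient_combination {s t : ℝ} (hst : s + t = 1) :
    orient a b (s • c + t • d) = s * orient a b c + t * orient a b d := by
  obtain rfl : s = 1 - t := by linarith
  simp only [orient, Prod.fst_add, Prod.smul_fst, Prod.snd_add, Prod.smul_snd, smul_eq_mul]
  ring

lemma orient_eq_zero_of_mem_openSegment (h : p ∈ openSegment ℝ a b) : orient a b p = 0 := by
  obtain ⟨s, t, -, -, hst, rfl⟩ := h
  rw [orient_combination hst, ← orient_rotate, orient_self_right, orient_self_right]
  ring

lemma disjoint_openSegment_of_orient_mul_pos (h : 0 < orient a b c * orient a b d) :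
    Disjoint (openSegment ℝ a b) (openSegment ℝ c d) := by
  rw [Set.disjoint_left]
  rintro _ hab ⟨s, t, hs, ht, hst, rfl⟩
  have hzero : s * orient a b c + t * orient a b d = 0 :=
    (orient_combination hst).symm.trans (orient_eq_zero_of_mem_openSegment hab)
  obtain ⟨hc, hd⟩ | ⟨hc, hd⟩ := pos_and_pos_or_neg_and_neg_of_mul_pos h
  · linarith [mul_pos hs hc, mul_pos ht hd]
  · linarith [mul_neg_of_pos_of_neg hs hc, mul_neg_of_pos_of_neg ht hd]

lemma mem_convexHull_triple (hT : 0 < orient a b c) (ha : 0 ≤ orient b c p)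
    (hb : 0 ≤ orient c a p) (hc : 0 ≤ orient a b p) : p ∈ convexHull ℝ ({a, b, c} : Set Pt) := by
  have hsum : orient b c p + orient c a p + orient a b p = orient a b c := by
    unfold orient
    ring
  -- Barycentric coordinates are ratios of signed areas.
  refine mem_convexHull_of_exists_fintype
    ![orient b c p / orient a b c, orient c a p / orient a b c, orient a b p / orient a b c]
    ![a, b, c] ?_ ?_ (by simp [Fin.forall_fin_succ]) ?_
  · simp only [Fin.forall_fin_succ]
    exact ⟨by simpa using div_nonneg ha hT.le, by simpa using div_nonneg hb hT.le,
      by simpa using div_nonneg hc hT.le, nofun⟩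
  · simp only [Fin.sum_univ_three, Matrix.cons_val]
    rw [← add_div, ← add_div, hsum, div_self hT.ne']
  · have hT' := hT.ne'
    ext
    · simp only [Fin.sum_univ_three, Matrix.cons_val, Prod.fst_add, Prod.smul_fst, smul_eq_mul]
      field_simp
      unfold orient
      ring
    · simp only [Fin.sum_univ_three, Matrix.cons_val, Prod.snd_add, Prod.smul_snd, smul_eq_mul]
      field_simp
      unfold orient
      ring

lemma fst_lt_fst_of_orient_pos (ha : toLex o < toLex a) (hb : toLex o < toLex b)
    (h : 0 < orient o a b) : o.1 < a.1 := by
  rw [Prod.Lex.toLex_lt_toLex] at ha hb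
  obtain ha | ⟨ha₁, ha₂⟩ := ha
  · exact ha
  · have hb₁ : o.1 ≤ b.1 := hb.elim le_of_lt fun hb ↦ hb.1.le
    have hab : 0 ≤ (a.2 - o.2) * (b.1 - o.1) :=
      mul_nonneg (sub_nonneg.2 ha₂.le) (sub_nonneg.2 hb₁)
    rw [orient, ← ha₁, sub_self, zero_mul] at h
    linarith

lemma orient_pos_trans (ha : toLex o < toLex a) (hb : toLex o < toLex b) (hc : toLex o < toLex c)
    (hab : 0 < orient o a b) (hbc : 0 < orient o b c) : 0 < orient o a c := by
  have ha₁ := fst_lt_fst_of_orient_pos ha hb hab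
  have hb₁ := fst_lt_fst_of_orient_pos hb hc hbc
  have hc₁ : o.1 ≤ c.1 := (Prod.Lex.toLex_lt_toLex.1 hc).elim le_of_lt fun hc ↦ hc.1.le
  have hid : (b.1 - o.1) * orient o a c =
      (a.1 - o.1) * orient o b c + (c.1 - o.1) * orient o a b := by
    unfold orient
    ring
  refine pos_of_mul_pos_right (a := b.1 - o.1) ?_ (sub_nonneg.2 hb₁.le)
  rw [hid]
  exact add_pos_of_pos_of_nonneg (mul_pos (sub_pos.2 ha₁) hbc)
    (mul_nonneg (sub_nonneg.2 hc₁) hab.le)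

end Orientation

section Enumeration

variable {P : Finset Pt} {o a b c : Pt}

/-- The order in which a ray rotating counterclockwise about `o` meets the points of an open
half-plane bounded by a line through `o`, with `o` itself as least element. -/
def AngularLT (o a b : Pt) : Prop :=
  b ≠ o ∧ (a = o ∨ 0 < orient o a b)

lemma isStrictTotalOrder_angularLT (hP : GenPos P) (ho : o ∈ P)
    (hmin : ∀ p ∈ P, toLex o ≤ toLex p) :
    IsStrictTotalOrder P (fun a b ↦ AngularLT o a b) := by
  have hlt : ∀ p ∈ P, p ≠ o → toLex o < toLex p := fun p hp hpo ↦
    (hmin p hp).lt_of_ne fun h ↦ hpo (toLex.injective h).symm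
  refine @IsStrictTotalOrder.mk _ _ ⟨?trichotomous⟩ (@IsStrictOrder.mk _ _ ⟨?irrefl⟩ ⟨?trans⟩)
  case irrefl =>
    rintro a ⟨hao, h | h⟩
    · exact hao h
    · exact h.ne' (orient_self_right _ _)
  case trans =>
    rintro a b c ⟨hbo, hab⟩ ⟨hco, hbc⟩
    refine ⟨hco, or_iff_not_imp_left.2 fun hao ↦ ?_⟩
    exact orient_pos_trans (hlt a a.2 hao) (hlt b b.2 hbo) (hlt c c.2 hco)
      (hab.resolve_left hao) (hbc.resolve_left hbo)
  case trichotomous =>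
    intro a b hab hba
    by_contra hne
    have hne' : (a : Pt) ≠ b := Subtype.coe_ne_coe.2 hne
    by_cases hao : (a : Pt) = o
    · exact hab ⟨fun hbo ↦ hne' (hao.trans hbo.symm), Or.inl hao⟩
    by_cases hbo : (b : Pt) = o
    · exact hba ⟨hao, Or.inl hbo⟩
    have hzero : orient o a b ≠ 0 := fun h ↦
      hP o ho a a.2 b b.2 (Ne.symm hao) (Ne.symm hbo) hne' (collinear_of_orient_eq_zero h)
    obtain h | h := hzero.lt_or_gt
    · exact hba ⟨hao, Or.inr (by rw [orient_swap]; linarith)⟩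
    · exact hab ⟨hbo, Or.inr h⟩

lemma ConvexPos.orient_pos_of_orient_pos (hP : ConvexPos P) (ho : o ∈ P) (ha : a ∈ P) (hb : b ∈ P)
    (hc : c ∈ P) (hab : 0 < orient o a b) (hbc : 0 < orient o b c) (hac : 0 < orient o a c) :
    0 < orient a b c := by
  by_contra! habc
  have hb_mem : b ∈ convexHull ℝ ({o, a, c} : Set Pt) :=
    mem_convexHull_triple hac (by rw [orient_swap]; linarith)
      (by rw [orient_rotate, orient_rotate]; exact hbc.le) hab.le
  have hbo : b ≠ o := by
    rintro rfl
    exact hab.ne' (by rw [← orient_rotate, orient_self_right])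
  have hba : b ≠ a := by
    rintro rfl
    exact hab.ne' (orient_self_right _ _)
  have hbc' : b ≠ c := by
    rintro rfl
    exact hbc.ne' (orient_self_right _ _)
  refine hP.2 b hb (convexHull_mono ?_ hb_mem)
  simp [Set.insert_subset_iff, ho, ha, hc, hbo.symm, hba.symm, hbc'.symm]

lemma ConvexPos.orient_pos_of_angularLT (hP : ConvexPos P) (ho : o ∈ P) (ha : a ∈ P) (hb : b ∈ P)
    (hc : c ∈ P) (hab : AngularLT o a b) (hbc : AngularLT o b c) (hac : AngularLT o a c) :
    0 < orient a b c := by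
  have hobc := hbc.2.resolve_left hab.1
  obtain rfl | hao := eq_or_ne a o
  · exact hobc
  · exact hP.orient_pos_of_orient_pos ho ha hb hc (hab.2.resolve_left hao) hobc
      (hac.2.resolve_left hao)

lemma exists_equiv_fin_of_isStrictTotalOrder {α : Type*} [Fintype α] (r : α → α → Prop)
    [IsStrictTotalOrder α r] :
    ∃ e : Fin (Fintype.card α) ≃ α, ∀ ⦃i j⦄, i < j → r (e i) (e j) := by
  classical
  let _ : LinearOrder α := linearOrderOfSTO r
  exact ⟨(monoEquivOfFin α rfl).toEquiv, fun _ _ h ↦ (monoEquivOfFin α rfl).strictMono h⟩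

/-- The points `v 0, …, v (n - 1)` are the vertices of a convex polygon in counterclockwise
order. -/
def IsCcw {n : ℕ} (v : Fin n → Pt) : Prop :=
  ∀ ⦃i j k⦄, i < j → j < k → 0 < orient (v i) (v j) (v k)

lemma ConvexPos.exists_isCcw (hP : ConvexPos P) :
    ∃ v : Fin #P → Pt, Function.Injective v ∧ Set.range v = P ∧ IsCcw v := by
  obtain rfl | hne := P.eq_empty_or_nonempty
  · exact ⟨nofun, nofun, by simp, nofun⟩
  obtain ⟨o, ho, hmin⟩ := P.exists_min_image toLex hne
  have := isStrictTotalOrder_angularLT hP.1 ho hmin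
  rw [← Fintype.card_coe P]
  obtain ⟨e, he⟩ := exists_equiv_fin_of_isStrictTotalOrder fun a b : P ↦ AngularLT o a b
  refine ⟨Subtype.val ∘ e, Subtype.val_injective.comp e.injective, ?_, fun i j k hij hjk ↦ ?_⟩
  · rw [e.surjective.range_comp, Subtype.range_coe_subtype, Finset.setOfPred_mem]
  · exact hP.orient_pos_of_angularLT ho (e i).2 (e j).2 (e k).2 (he hij) (he hjk)
      (he (hij.trans hjk))

end Enumeration

section Chords

variable {n : ℕ} {i j k l x y x' y' : Fin n} {v : Fin n → Pt}

/-- The chord `x y` of an `n`-gon crosses the chord `i j`, where `i < j`, and `x` is its endpoint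
on the arc from `i` to `j`. -/
def Straddles (i j x y : Fin n) : Prop :=
  (i < x ∧ x < j) ∧ (y < i ∨ j < y)

lemma IsCcw.orient_neg (hv : IsCcw v) (hix : i < x) (hxj : x < j) :
    orient (v i) (v j) (v x) < 0 := by
  rw [orient_swap]
  linarith [hv hix hxj]

lemma IsCcw.orient_pos (hv : IsCcw v) (hij : i < j) (hy : y < i ∨ j < y) :
    0 < orient (v i) (v j) (v y) := by
  obtain hy | hy := hy
  · rw [orient_rotate]
    exact hv hy hij
  · exact hv hij hy

lemma Cross.not_disjoint_openSegment {a b c d : Pt} (h : Cross s(a, b) s(c, d)) :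
    ¬ Disjoint (openSegment ℝ a b) (openSegment ℝ c d) := by
  obtain ⟨-, p, q, r, s, hab, hcd, hmeet⟩ := h
  have hsegment : ∀ {a b p q : Pt}, s(a, b) = s(p, q) →
      openSegment ℝ a b = openSegment ℝ p q := by
    intro a b p q h
    obtain ⟨rfl, rfl⟩ | ⟨rfl, rfl⟩ := Sym2.eq_iff.1 h
    · rfl
    · exact openSegment_symm ℝ a b
  rwa [hsegment hab, hsegment hcd, Set.not_disjoint_iff_nonempty_inter]

lemma IsCcw.straddles_of_cross (hv : IsCcw v) (hij : i < j) (h : Cross s(v i, v j) s(v k, v l)) :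
    Straddles i j k l ∨ Straddles i j l k := by
  have hne : (i ≠ k ∧ i ≠ l) ∧ (j ≠ k ∧ j ≠ l) := by
    have hi := h.1 (v i) (by simp)
    have hj := h.1 (v j) (by simp)
    simp only [Sym2.mem_iff, not_or] at hi hj
    exact ⟨⟨ne_of_apply_ne v hi.1, ne_of_apply_ne v hi.2⟩,
      ⟨ne_of_apply_ne v hj.1, ne_of_apply_ne v hj.2⟩⟩
  by_contra hnot
  obtain ⟨hk, hl⟩ | ⟨hk, hl⟩ : ((i < k ∧ k < j) ∧ (i < l ∧ l < j)) ∨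
      ((k < i ∨ j < k) ∧ (l < i ∨ j < l)) := by
    unfold Straddles at hnot
    omega
  · exact h.not_disjoint_openSegment (disjoint_openSegment_of_orient_mul_pos
      (mul_pos_of_neg_of_neg (hv.orient_neg hk.1 hk.2) (hv.orient_neg hl.1 hl.2)))
  · exact h.not_disjoint_openSegment (disjoint_openSegment_of_orient_mul_pos
      (mul_pos (hv.orient_pos hij hk) (hv.orient_pos hij hl)))

/-- The slope of the chord `i j` of an `n`-gon: two chords of a regular `n`-gon are parallel if
and only if their slopes agree. -/
def chordSlope (i j : Fin n) : ℕ :=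
  (i + j : ℕ) % n

lemma chordSlope_comm (i j : Fin n) : chordSlope i j = chordSlope j i := by
  rw [chordSlope, chordSlope, add_comm]

lemma chordSlope_lt (i j : Fin n) : chordSlope i j < n :=
  Nat.mod_lt _ i.pos

lemma chordSlope_eq_or (i j : Fin n) :
    chordSlope i j = i + j ∨ chordSlope i j + n = i + j := by
  unfold chordSlope
  obtain h | h := lt_or_ge (i + j : ℕ) n
  · exact Or.inl (Nat.mod_eq_of_lt h)
  · rw [Nat.mod_eq_sub_mod h, Nat.mod_eq_of_lt (by omega)]
    omega

lemma chordSlope_right_injective (i : Fin n) : Function.Injective (chordSlope i) := by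
  intro x y h
  have := chordSlope_eq_or i x
  have := chordSlope_eq_or i y
  omega

lemma Straddles.chordSlope_between (h : Straddles i j x y) :
    (chordSlope i j < chordSlope j x ∧ chordSlope j x < chordSlope x y) ∨
      (chordSlope x y < chordSlope i x ∧ chordSlope i x < chordSlope i j) := by
  -- As integers, `i + j < j + x < x + y` if `j < y`, and `x + y < i + x < i + j` if `y < i`.
  -- When exactly one of `i + j` and `x + y` is reduced modulo `n`, the two cases trade places.
  have := chordSlope_eq_or i j
  have := chordSlope_eq_or x y
  have := chordSlope_eq_or j x
  have := chordSlope_eq_or i x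
  have := chordSlope_lt i j
  have := chordSlope_lt x y
  have := chordSlope_lt j x
  have := chordSlope_lt i x
  unfold Straddles at h
  omega

/-- The slope of a chord that shares one endpoint with each of the crossing chords `i j` and `x y`
and whose slope lies strictly between theirs. -/
def middleSlope (i j x y : Fin n) : ℕ :=
  if chordSlope i j < chordSlope x y then chordSlope j x else chordSlope i x

lemma Straddles.middleSlope_between (h : Straddles i j x y) :
    (chordSlope i j < middleSlope i j x y ∧ middleSlope i j x y < chordSlope x y) ∨
      (chordSlope x y < middleSlope i j x y ∧ middleSlope i j x y < chordSlope i j) := by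
  have := h.chordSlope_between
  unfold middleSlope
  split_ifs <;> omega

lemma Straddles.eq_of_slopes_eq (h : Straddles i j x y) (h' : Straddles i j x' y')
    (hslopes : s(chordSlope x y, middleSlope i j x y) =
      s(chordSlope x' y', middleSlope i j x' y')) : x = x' ∧ y = y' := by
  have hbetween := h.middleSlope_between
  have hbetween' := h'.middleSlope_between
  obtain ⟨hslope, hmiddle⟩ | ⟨hslope, hmiddle⟩ := Sym2.eq_iff.1 hslopes
  · have hx : x = x' := by
      unfold middleSlope at hmiddle
      rw [← hslope] at hmiddle
      split_ifs at hmiddle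
      · exact chordSlope_right_injective j hmiddle
      · exact chordSlope_right_injective i hmiddle
    subst hx
    exact ⟨rfl, chordSlope_right_injective x hslope⟩
  · omega

lemma ncard_straddles_le {m : ℕ} (hm : 0 < m) (i j : Fin n) :
    {p : Fin n × Fin n | Straddles i j p.1 p.2 ∧
      chordSlope p.1 p.2 / m = chordSlope i j / m}.ncard ≤ (m - 1).choose 2 := by
  let window := Ico (chordSlope i j / m * m) (chordSlope i j / m * m + m)
  have mem_window : ∀ {a}, a / m = chordSlope i j / m → a ∈ window := fun h ↦
    mem_Ico.2 (h ▸ ⟨Nat.div_mul_le_self _ _, Nat.lt_div_mul_add hm⟩)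
  have hcard : #(window.erase (chordSlope i j)) = m - 1 := by
    rw [card_erase_of_mem (mem_window rfl), Nat.card_Ico, Nat.add_sub_cancel_left]
  rw [← hcard, ← Sym2.card_image_offDiag, ← Set.ncard_coe_finset]
  refine Set.ncard_le_ncard_of_injOn
    (fun p ↦ s(chordSlope p.1 p.2, middleSlope i j p.1 p.2)) ?_ ?_
  · rintro ⟨x, y⟩ ⟨(h : Straddles i j x y), hwindow⟩
    have hslopes : (chordSlope x y, middleSlope i j x y) ∈
        (window.erase (chordSlope i j)).offDiag := by
      have hbetween := h.middleSlope_between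
      have hij := mem_Ico.1 (mem_window (a := chordSlope i j) rfl)
      have hxy := mem_Ico.1 (mem_window (a := chordSlope x y) hwindow)
      simp only [window, mem_offDiag, mem_erase, mem_Ico]
      omega
    exact mem_coe.2 (mem_image_of_mem _ hslopes)
  · rintro ⟨x, y⟩ ⟨h, -⟩ ⟨x', y'⟩ ⟨h', -⟩ hslopes
    exact Prod.ext_iff.2 (h.eq_of_slopes_eq h' hslopes)

end Chords

section Partition

variable {n : ℕ} {v : Fin n → Pt} {P : Finset Pt} {m : ℕ}

/-- The edges between the points `v 0, …, v (n - 1)` whose slope lies in the `c`-th window of `m`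
consecutive slopes. -/
def slopeClass (v : Fin n → Pt) (m c : ℕ) : Set (Sym2 Pt) :=
  {e | ∃ i j, i < j ∧ e = s(v i, v j) ∧ chordSlope i j / m = c}

lemma mem_kEdges_iff_exists_lt (hinj : Function.Injective v) (hrange : Set.range v = P)
    {e : Sym2 Pt} : e ∈ KEdges P ↔ ∃ i j, i < j ∧ e = s(v i, v j) := by
  have hmem : ∀ {p}, p ∈ P ↔ ∃ i, v i = p := by
    intro p
    rw [← mem_coe, ← hrange, Set.mem_range]
  constructor
  · rintro ⟨p, hp, q, hq, hpq, rfl⟩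
    obtain ⟨i, rfl⟩ := hmem.1 hp
    obtain ⟨j, rfl⟩ := hmem.1 hq
    obtain hij | hji := (ne_of_apply_ne v hpq).lt_or_gt
    · exact ⟨i, j, hij, rfl⟩
    · exact ⟨j, i, hji, Sym2.eq_swap⟩
  · rintro ⟨i, j, hij, rfl⟩
    exact ⟨v i, hmem.2 ⟨i, rfl⟩, v j, hmem.2 ⟨j, rfl⟩, hinj.ne hij.ne, rfl⟩

lemma iUnion_slopeClass (hinj : Function.Injective v) (hrange : Set.range v = P) (hm : 0 < m) :
    ⋃ c : Fin ⌈(n : ℝ) / m⌉₊, slopeClass v m c = KEdges P := by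
  ext e
  simp only [Set.mem_iUnion, mem_kEdges_iff_exists_lt hinj hrange]
  constructor
  · rintro ⟨c, i, j, hij, he, -⟩
    exact ⟨i, j, hij, he⟩
  · rintro ⟨i, j, hij, he⟩
    have hwindow : chordSlope i j / m < ⌈(n : ℝ) / m⌉₊ := by
      rw [Nat.lt_ceil, lt_div_iff₀ (by exact_mod_cast hm)]
      exact_mod_cast (Nat.div_mul_le_self _ _).trans_lt (chordSlope_lt i j)
    exact ⟨⟨_, hwindow⟩, i, j, hij, he, rfl⟩

lemma disjoint_slopeClass (hinj : Function.Injective v) {c d : ℕ} (hcd : c ≠ d) :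
    Disjoint (slopeClass v m c) (slopeClass v m d) := by
  rw [Set.disjoint_left]
  rintro _ ⟨i, j, -, rfl, rfl⟩ ⟨k, l, -, he, rfl⟩
  obtain ⟨hik, hjl⟩ | ⟨hil, hjk⟩ := Sym2.eq_iff.1 he
  · rw [hinj hik, hinj hjl] at hcd
    exact hcd rfl
  · rw [hinj hil, hinj hjk, chordSlope_comm] at hcd
    exact hcd rfl

lemma IsCcw.kPlane_slopeClass (hv : IsCcw v) (hm : 0 < m) (c : ℕ) :
    KPlane ((m - 1).choose 2) (slopeClass v m c) := by
  rintro _ ⟨i, j, hij, rfl, rfl⟩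
  have hsub : {f | f ∈ slopeClass v m (chordSlope i j / m) ∧ Cross s(v i, v j) f} ⊆
      (fun p : Fin n × Fin n ↦ s(v p.1, v p.2)) '' {p | Straddles i j p.1 p.2 ∧
        chordSlope p.1 p.2 / m = chordSlope i j / m} := by
    rintro _ ⟨⟨k, l, -, rfl, hwindow⟩, hcross⟩
    obtain h | h := hv.straddles_of_cross hij hcross
    · exact ⟨(k, l), ⟨h, hwindow⟩, rfl⟩
    · exact ⟨(l, k), ⟨h, chordSlope_comm k l ▸ hwindow⟩, Sym2.eq_swap⟩
  exact ((Set.ncard_le_ncard hsub).trans Set.ncard_image_le).trans (ncard_straddles_le hm i j)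

end Partition

theorem stmt_0_general (n m : ℕ) (hm : 0 < m) (P : Finset Pt) (hP : ConvexPos P)
    (hcard : P.card = n) :
    ∃ F : Fin (⌈(n : ℝ) / m⌉₊) → Set (Sym2 Pt),
      (⋃ i, F i) = KEdges P ∧
      (Pairwise fun i j => Disjoint (F i) (F j)) ∧
      (∀ i, KPlane ((m - 1).choose 2) (F i)) := by
  subst hcard
  obtain ⟨v, hinj, hrange, hccw⟩ := hP.exists_isCcw
  exact ⟨fun c ↦ slopeClass v m c, iUnion_slopeClass hinj hrange hm,
    fun _ _ hcd ↦ disjoint_slopeClass hinj (Fin.val_ne_of_ne hcd),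
    fun c ↦ hccw.kPlane_slopeClass hm c⟩

/-- For `n ≥ 5` points in convex position, `K(P)` can be partitioned into
`⌈n/3⌉` classes each of which is 1-plane. -/
theorem stmt_0 (n : ℕ) (hn : 5 ≤ n) (P : Finset Pt) (hP : ConvexPos P) (hcard : P.card = n) :
    ∃ F : Fin (⌈(n : ℝ) / 3⌉₊) → Set (Sym2 Pt),
      (⋃ i, F i) = KEdges P ∧
      (Pairwise fun i j => Disjoint (F i) (F j)) ∧
      (∀ i, KPlane 1 (F i)) := by
  exact_mod_cast stmt_0_general n 3 (by norm_num) P hP hcard
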